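/- The lower triangular matrix C with c_{ij} = (2i-j-1)!/(2^{i-j}(j-1)!(i-j)!) for i ≥ j (0 otherwise) is a nonsingular totally positive matrix, with all diagonal entries equal to (2i-2)!/(2^{i-1}(i-1)!) = (2i-3)!! ... specifically c_{ii} = 1 for all i, and all minors of C are nonnegative. -/

import Mathlib

/-- Entries of the lower triangular reverse Bessel coefficient matrix. -/
noncomputable def revC (i j : ℕ) : ℝ :=
  if j ≤ i then ((2 * i - j - 1).factorial : ℝ) / (2 ^ (i - j) * (j - 1).factorial * (i - j).factorial)
  else 0

/-!
Write `A` for the coefficient matrix indexed from zero. Its entries satisfy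
`A (i+1) (j+1) = A i j + (j+2) * A (i+1) (j+2)` and `A (i+1) 0 = A (i+1) 1`, so the first `n + 1`
rows of `A`, which vanish beyond column `n`, arise from the block diagonal matrix
`1 ⊕ (first n rows of A)` by adding, from right to left, nonnegative multiples of each column to its
left neighbour. A minor is linear in each column,
and replacing a selected column by its right neighbour gives another minor or a determinant with
two equal columns, so these operations preserve nonnegativity of all minors.
-/

section StrictMono

variable {ι α β : Type*} [Preorder ι] [LinearOrder α]

lemma exists_strictMono_comp_eq [Preorder β] {f : α → β} {s : ι → β} (hf : StrictMono f)
    (hs : StrictMono s) (hmem : ∀ i, ∃ a, f a = s i) : ∃ t, StrictMono t ∧ f ∘ t = s := by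
  choose t ht using hmem
  refine ⟨t, fun i j hij => hf.lt_iff_lt.1 ?_, funext ht⟩
  rw [ht, ht]
  exact hs hij

lemma strictMono_update_of_covBy [DecidableEq ι] {s : ι → α} (hs : StrictMono s) {i : ι} {a : α}
    (hcov : s i ⋖ a) (ha : ∀ j, s j ≠ a) : StrictMono (Function.update s i a) := by
  intro j l hjl
  have hlt := hs hjl
  simp only [Function.update_apply]
  split_ifs with hj hl hl
  · exact absurd (hj.trans hl.symm) hjl.ne
  · subst hj
    exact (hcov.ge_of_gt hlt).lt_of_ne (ha l).symm
  · subst hl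
    exact hlt.trans hcov.lt
  · exact hlt

end StrictMono

section ColumnUpdate

variable {m n m' n' R : Type*} [DecidableEq n] (A : Matrix m n R) (r : m' → m) {c : n' → n}

lemma submatrix_updateCol_of_injective [DecidableEq n'] (hc : Function.Injective c) (q : n')
    (v : m → R) :
    (A.updateCol (c q) v).submatrix r c = (A.submatrix r c).updateCol q (v ∘ r) := by
  ext i p
  simp [Matrix.updateCol_apply, hc.eq_iff]

lemma submatrix_updateCol_of_forall_ne {j : n} (hj : ∀ q, c q ≠ j) (v : m → R) :
    (A.updateCol j v).submatrix r c = A.submatrix r c := by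
  ext i q
  simp [hj q]

end ColumnUpdate

lemma submatrix_update {m n m' n' R : Type*} [DecidableEq n'] (A : Matrix m n R) (r : m' → m)
    (c : n' → n) (q : n') (j : n) : A.submatrix r (Function.update c q j) =
      (A.submatrix r c).updateCol q fun i => A (r i) j := by
  ext i p
  by_cases hp : p = q <;> simp [hp]

section Bordered

/-- The block diagonal matrix `a ⊕ A`. Columns are indexed by `ℕ`, so that each column has a right
neighbour. -/
def bordered {R : Type*} [Zero R] {m : ℕ} (a : R) (A : Matrix (Fin m) ℕ R) :
    Matrix (Fin (m + 1)) ℕ R :=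
  Fin.cons (fun j => j.casesOn a fun _ => 0) fun i j => j.casesOn 0 (A i)

variable {R : Type*} [Zero R] {m : ℕ} (a : R) (A : Matrix (Fin m) ℕ R)

lemma bordered_zero_zero : bordered a A 0 0 = a := rfl

lemma bordered_zero_of_ne_zero {j : ℕ} (hj : j ≠ 0) : bordered a A 0 j = 0 := by
  obtain ⟨j, rfl⟩ := Nat.exists_eq_succ_of_ne_zero hj
  rfl

lemma bordered_of_ne_zero_zero {i : Fin (m + 1)} (hi : i ≠ 0) : bordered a A i 0 = 0 := by
  obtain ⟨i, rfl⟩ := Fin.exists_succ_eq_of_ne_zero hi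
  rfl

lemma bordered_succ_succ (i : Fin m) (j : ℕ) : bordered a A i.succ (j + 1) = A i j := rfl

end Bordered

section TotalPositivity

variable {R : Type*} [CommRing R] [PartialOrder R]

/-- Total positivity in the weak sense: all minors, with rows and columns taken in increasing order,
are nonnegative. The index types may be infinite. -/
def IsTotallyPositive {m n : Type*} [Preorder m] [Preorder n] (A : Matrix m n R) : Prop :=
  ∀ (k : ℕ) (r : Fin k → m) (c : Fin k → n), StrictMono r → StrictMono c →
    0 ≤ (A.submatrix r c).det

namespace IsTotallyPositive

lemma submatrix {m n m' n' : Type*} [Preorder m] [Preorder n] [Preorder m'] [Preorder n']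
    {A : Matrix m n R} (hA : IsTotallyPositive A) {f : m' → m} {g : n' → n} (hf : StrictMono f)
    (hg : StrictMono g) : IsTotallyPositive (A.submatrix f g) :=
  fun k r c hr hc => hA k (f ∘ r) (g ∘ c) (hf.comp hr) (hg.comp hc)

lemma of_forall_initial_rows {n : Type*} [Preorder n] {A : Matrix ℕ n R}
    (hA : ∀ m, IsTotallyPositive (A.submatrix (Fin.val : Fin m → ℕ) id)) :
    IsTotallyPositive A := by
  intro k r c hr hc
  have hbound (i : Fin k) : r i < Finset.univ.sup r + 1 :=
    Nat.lt_succ_of_le (Finset.le_sup (Finset.mem_univ i))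
  obtain ⟨t, ht, hrt⟩ := exists_strictMono_comp_eq Fin.val_strictMono hr
    fun i => ⟨⟨r i, hbound i⟩, rfl⟩
  rw [← hrt]
  exact hA _ k t c ht hc

lemma det_bordered_submatrix_nonneg_of_ne_zero {m : ℕ} {A : Matrix (Fin m) ℕ R}
    (hA : IsTotallyPositive A) (a : R) {k : ℕ} {r : Fin k → Fin (m + 1)} {c : Fin k → ℕ}
    (hr : StrictMono r) (hc : StrictMono c) (hr0 : ∀ i, r i ≠ 0) (hc0 : ∀ i, c i ≠ 0) :
    0 ≤ ((bordered a A).submatrix r c).det := by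
  obtain ⟨r', hr', rfl⟩ := exists_strictMono_comp_eq Fin.strictMono_succ hr
    fun i => Fin.exists_succ_eq.2 (hr0 i)
  obtain ⟨c', hc', rfl⟩ := exists_strictMono_comp_eq (Order.succ_strictMono (α := ℕ)) hc
    fun i => Nat.exists_add_one_eq.2 (Nat.pos_of_ne_zero (hc0 i))
  exact hA k r' c' hr' hc'

lemma of_isEmpty_rows [ZeroLEOneClass R] {m n : Type*} [Preorder m] [Preorder n] [IsEmpty m]
    (A : Matrix m n R) : IsTotallyPositive A := by
  intro k r c _ _
  have : IsEmpty (Fin k) := Function.isEmpty r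
  rw [Matrix.det_isEmpty]
  exact zero_le_one

variable [IsOrderedRing R]

lemma updateCol_add_mul_of_covBy {m n : Type*} [Preorder m] [LinearOrder n] {A : Matrix m n R}
    (hA : IsTotallyPositive A) {j j' : n} (hcov : j ⋖ j') {a : R} (ha : 0 ≤ a) :
    IsTotallyPositive (A.updateCol j fun i => A i j + a * A i j') := by
  intro k r c hr hc
  by_cases hj : ∃ q, c q = j
  · obtain ⟨q, rfl⟩ := hj
    have hsub : (A.updateCol (c q) fun i => A i (c q) + a * A i j').submatrix r c =
        (A.submatrix r c).updateCol q
          ((fun i => A.submatrix r c i q) + a • fun i => A (r i) j') :=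
      submatrix_updateCol_of_injective A r hc.injective q _
    rw [hsub]
    by_cases hj' : ∃ p, c p = j'
    · obtain ⟨p, rfl⟩ := hj'
      have hqp : q ≠ p := fun h => hcov.ne (congrArg c h)
      exact (hA k r c hr hc).trans_eq (Matrix.det_updateCol_add_smul_self _ hqp a).symm
    · push Not at hj'
      rw [Matrix.det_updateCol_add, Matrix.det_updateCol_smul, Matrix.updateCol_eq_self,
        ← submatrix_update]
      exact add_nonneg (hA k r c hr hc)
        (mul_nonneg ha (hA k r _ hr (strictMono_update_of_covBy hc hcov hj')))
  · push Not at hj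
    rw [submatrix_updateCol_of_forall_ne A r hj]
    exact hA k r c hr hc

lemma of_col_recurrence {m : Type*} [Preorder m] {A B : Matrix m ℕ R} {w : ℕ → R} {N : ℕ}
    (hA : IsTotallyPositive A) (hw : ∀ j, 0 ≤ w j) (hN : ∀ i, ∀ j ≥ N, B i j = A i j)
    (hrec : ∀ i j, B i j = A i j + w j * B i (j + 1)) : IsTotallyPositive B := by
  let interp (M : ℕ) : Matrix m ℕ R := .of fun i j => if M ≤ j then B i j else A i j
  have interp_zero : interp 0 = B := by
    ext i j
    simp [interp]
  have interp_last : interp N = A := by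
    ext i j
    simpa [interp] using hN i j
  have interp_step (M : ℕ) : interp M =
      (interp (M + 1)).updateCol M
        fun i => interp (M + 1) i M + w M * interp (M + 1) i (M + 1) := by
    ext i j
    rcases lt_trichotomy j M with h | rfl | h
    · simp [interp, h.ne, h.not_ge, h.le]
    · simpa [interp, Matrix.updateCol_apply] using hrec i j
    · simp [interp, h.ne', h.le, h]
  rw [← interp_zero]
  refine Nat.decreasingInduction (motive := fun M _ => IsTotallyPositive (interp M))
    (fun M _ hM => ?_) (interp_last ▸ hA) (Nat.zero_le N)
  rw [interp_step]
  exact hM.updateCol_add_mul_of_covBy (Order.covBy_add_one M) (hw M)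

lemma bordered_of_nonneg {m : ℕ} {A : Matrix (Fin m) ℕ R} (hA : IsTotallyPositive A) {a : R}
    (ha : 0 ≤ a) : IsTotallyPositive (bordered a A) := by
  intro k r c hr hc
  rcases k with _ | k
  · rw [Matrix.det_isEmpty]
    exact zero_le_one
  have hr_succ (i : Fin k) : r i.succ ≠ 0 := ((Fin.zero_le _).trans_lt (hr i.succ_pos)).ne'
  have hc_succ (i : Fin k) : c i.succ ≠ 0 := ((Nat.zero_le _).trans_lt (hc i.succ_pos)).ne'
  by_cases hr0 : r 0 = 0 <;> by_cases hc0 : c 0 = 0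
  · have hdet : ((bordered a A).submatrix r c).det =
        a * ((bordered a A).submatrix (r ∘ Fin.succ) (c ∘ Fin.succ)).det := by
      rw [Matrix.det_succ_row_zero, Fin.sum_univ_succ]
      simp [hr0, hc0, bordered_zero_zero, bordered_zero_of_ne_zero, hc_succ, Function.comp_def]
    rw [hdet]
    exact mul_nonneg ha (hA.det_bordered_submatrix_nonneg_of_ne_zero a
      (hr.comp Fin.strictMono_succ) (hc.comp Fin.strictMono_succ) hr_succ hc_succ)
  · refine (Matrix.det_eq_zero_of_row_eq_zero 0 fun j => ?_).ge
    have hcj : c j ≠ 0 := Fin.cases hc0 hc_succ j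
    rw [Matrix.submatrix_apply, hr0, bordered_zero_of_ne_zero a A hcj]
  · refine (Matrix.det_eq_zero_of_column_eq_zero 0 fun i => ?_).ge
    have hri : r i ≠ 0 := Fin.cases hr0 hr_succ i
    rw [Matrix.submatrix_apply, hc0, bordered_of_ne_zero_zero a A hri]
  · exact hA.det_bordered_submatrix_nonneg_of_ne_zero a hr hc (Fin.cases hr0 hr_succ)
      (Fin.cases hc0 hc_succ)

lemma of_recurrence {A : Matrix ℕ ℕ R} {w : ℕ → R} (hlow : A.IsLowerTriangular)
    (hzero : 0 ≤ A 0 0) (hw : ∀ j, 0 ≤ w j) (hcol : ∀ i, A (i + 1) 0 = w 0 * A (i + 1) 1)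
    (hrec : ∀ i j, A (i + 1) (j + 1) = A i j + w (j + 1) * A (i + 1) (j + 2)) :
    IsTotallyPositive A := by
  refine of_forall_initial_rows fun n => ?_
  induction n with
  | zero => exact of_isEmpty_rows _
  | succ n ih =>
    have hbordered (i : Fin (n + 1)) (j : ℕ) : A i j =
        bordered (A 0 0) (A.submatrix (Fin.val : Fin n → ℕ) id) i j + w j * A i (j + 1) := by
      rcases i.eq_zero_or_eq_succ with rfl | ⟨i, rfl⟩ <;> rcases j with _ | j
      · simp [bordered_zero_zero, hlow Nat.zero_lt_one]
      · simp [bordered_zero_of_ne_zero, hlow (Nat.succ_pos _)]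
      · simpa [bordered_of_ne_zero_zero] using hcol i
      · simpa [bordered_succ_succ] using hrec i j
    refine (ih.bordered_of_nonneg hzero).of_col_recurrence (N := n) hw (fun i j hj => ?_) hbordered
    have hij : (i : ℕ) < j + 1 := by omega
    rw [Matrix.submatrix_apply, id, hbordered, hlow hij, mul_zero, add_zero]

end IsTotallyPositive

end TotalPositivity

/-- The infinite matrix of which the matrices of the theorem are the leading blocks; both indices
start at zero, so entries are `revC (i + 1) (j + 1)`. -/
noncomputable def revCMatrix : Matrix ℕ ℕ ℝ := fun i j => revC (i + 1) (j + 1)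

lemma revCMatrix_isLowerTriangular : revCMatrix.IsLowerTriangular := by
  intro i j hij
  have hij' : i < j := hij
  exact if_neg (by omega)

lemma revCMatrix_add_self (d j : ℕ) : revCMatrix (j + d) j =
    ((2 * d + j).factorial : ℝ) / (2 ^ d * j.factorial * d.factorial) := by
  have hnum : 2 * (j + d + 1) - (j + 1) - 1 = 2 * d + j := by omega
  have hdiff : j + d + 1 - (j + 1) = d := by omega
  rw [revCMatrix, revC, if_pos (by omega), hnum, hdiff, Nat.add_sub_cancel]

lemma revCMatrix_self (i : ℕ) : revCMatrix i i = 1 := by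
  simpa [Nat.factorial_ne_zero] using revCMatrix_add_self 0 i

lemma revCMatrix_succ_zero (i : ℕ) : revCMatrix (i + 1) 0 = revCMatrix (i + 1) 1 := by
  have hleft := revCMatrix_add_self (i + 1) 0
  have hright := revCMatrix_add_self i 1
  rw [zero_add] at hleft
  rw [add_comm 1 i] at hright
  rw [hleft, hright, show 2 * (i + 1) + 0 = 2 * i + 1 + 1 by ring, Nat.factorial_succ (2 * i + 1),
    Nat.factorial_succ i, Nat.factorial_zero, Nat.factorial_one]
  push_cast
  field_simp
  ring

lemma revCMatrix_succ_succ (i j : ℕ) : revCMatrix (i + 1) (j + 1) =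
    revCMatrix i j + (j + 2) * revCMatrix (i + 1) (j + 2) := by
  rcases lt_trichotomy i j with hij | rfl | hij
  · rw [revCMatrix_isLowerTriangular (show i + 1 < j + 1 by omega),
      revCMatrix_isLowerTriangular hij,
      revCMatrix_isLowerTriangular (show i + 1 < j + 2 by omega), mul_zero, add_zero]
  · rw [revCMatrix_self, revCMatrix_self, revCMatrix_isLowerTriangular (Nat.lt_succ_self (i + 1)),
      mul_zero, add_zero]
  · obtain ⟨d, rfl⟩ := Nat.exists_eq_add_of_lt hij
    have hcur := revCMatrix_add_self (d + 1) (j + 1)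
    have hdiag := revCMatrix_add_self (d + 1) j
    have hright := revCMatrix_add_self d (j + 2)
    rw [show j + 1 + (d + 1) = j + d + 1 + 1 by ring,
      show 2 * (d + 1) + (j + 1) = 2 * d + j + 2 + 1 by ring] at hcur
    rw [← add_assoc, show 2 * (d + 1) + j = 2 * d + j + 2 by ring] at hdiag
    rw [show j + 2 + d = j + d + 1 + 1 by ring, ← add_assoc (2 * d)] at hright
    rw [hcur, hdiag, hright, Nat.factorial_succ (2 * d + j + 2), Nat.factorial_succ (j + 1),
      Nat.factorial_succ j, Nat.factorial_succ d]
    push_cast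
    field_simp
    ring

lemma isTotallyPositive_revCMatrix : IsTotallyPositive revCMatrix := by
  refine .of_recurrence (w := fun j => j + 1) revCMatrix_isLowerTriangular ?_ ?_ ?_ ?_
  · exact (revCMatrix_self 0).ge.trans' zero_le_one
  · intro j
    positivity
  · intro i
    simpa using revCMatrix_succ_zero i
  · intro i j
    rw [revCMatrix_succ_succ]
    push_cast
    ring

theorem revC_TP_nonsingular (n : ℕ) :
    let C : Matrix (Fin n) (Fin n) ℝ := fun i j => revC (i + 1) (j + 1)
    (∀ i, C i i = 1) ∧
      (∀ (k : ℕ) (r c : Fin k → Fin n), StrictMono r → StrictMono c →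
          0 ≤ (C.submatrix r c).det) ∧
      C.det ≠ 0 := by
  intro C
  have hdiag (i : Fin n) : C i i = 1 := revCMatrix_self i
  have hC : C.IsLowerTriangular := fun _ _ hij => revCMatrix_isLowerTriangular hij
  refine ⟨hdiag, isTotallyPositive_revCMatrix.submatrix Fin.val_strictMono Fin.val_strictMono, ?_⟩
  simp [Matrix.det_of_isLowerTriangular C hC, hdiag]
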